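/- Let R be the quotient of ℂ⟨e1,e2,e3⟩ by the two-sided ideal generated by e1e2 + e2e1, e1e3 + e3e1, e2e3 − e3e2 − e1, e2², and e3². Then h_0 = 1 and h_n = 2 for every n ≥ 1; equivalently, the Poincaré series Σ_{n≥0} h_n z^n equals (1+z)/(1−z). -/

import Mathlib

open CategoryTheory FreeAlgebra

/-- `Ext^m_R(ℂ,ℂ)` as a ℂ-module, where `ℂ` is an `R`-module via the augmentation `ε`. -/
noncomputable def extC (R : Type) [Ring R] [Algebra ℂ R] (ε : R →ₐ[ℂ] ℂ) (m : ℕ) :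
    ModuleCat ℂ :=
  letI : Module R ℂ := Module.compHom ℂ ε.toRingHom
  ((Ext ℂ (ModuleCat R) m).obj (Opposite.op (ModuleCat.of R ℂ))).obj (ModuleCat.of R ℂ)

/-- `h_m = dim_ℂ Ext^m_R(ℂ,ℂ)`. -/
noncomputable def extDim (R : Type) [Ring R] [Algebra ℂ R] (ε : R →ₐ[ℂ] ℂ) (m : ℕ) : ℕ :=
  Module.finrank ℂ (extC R ε m)

/-- Relations: `e1e2 + e2e1 = 0`, `e1e3 + e3e1 = 0`, `e2e3 - e3e2 = e1`, `e2² = 0`, `e3² = 0`. -/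
inductive CRel : FreeAlgebra ℂ (Fin 3) → FreeAlgebra ℂ (Fin 3) → Prop
  | r12 : CRel (ι ℂ 0 * ι ℂ 1 + ι ℂ 1 * ι ℂ 0) 0
  | r13 : CRel (ι ℂ 0 * ι ℂ 2 + ι ℂ 2 * ι ℂ 0) 0
  | r23 : CRel (ι ℂ 1 * ι ℂ 2 - ι ℂ 2 * ι ℂ 1) (ι ℂ 0)
  | r22 : CRel (ι ℂ 1 * ι ℂ 1) 0
  | r33 : CRel (ι ℂ 2 * ι ℂ 2) 0


namespace Betti

abbrev RR := RingQuot CRel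
noncomputable def xx : RR := RingQuot.mkAlgHom ℂ CRel (ι ℂ 0)
noncomputable def yy : RR := RingQuot.mkAlgHom ℂ CRel (ι ℂ 1)
noncomputable def zz : RR := RingQuot.mkAlgHom ℂ CRel (ι ℂ 2)

lemma yy_sq : yy * yy = 0 := by
  have := RingQuot.mkAlgHom_rel ℂ CRel.r22
  simpa [yy] using this

lemma zz_sq : zz * zz = 0 := by
  have := RingQuot.mkAlgHom_rel ℂ CRel.r33
  simpa [zz] using this

lemma xx_eq : xx = yy * zz - zz * yy := by
  have := RingQuot.mkAlgHom_rel ℂ CRel.r23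
  simpa [xx, yy, zz] using this.symm

/-- Induction principle: a subset closed under the operations and containing the two generators. -/
lemma ind {P : RR → Prop} (hc : ∀ c : ℂ, P (algebraMap ℂ RR c)) (hy : P yy) (hz : P zz)
    (hadd : ∀ a b, P a → P b → P (a + b)) (hmul : ∀ a b, P a → P b → P (a * b)) (r : RR) : P r := by
  have hsub : ∀ a b, P a → P b → P (a - b) := by
    intro a b ha hb
    have := hadd a _ ha (hmul _ b (hc (-1)) hb)
    have e : algebraMap ℂ RR (-1) * b = -b := by
      rw [map_neg, map_one]
      exact neg_one_mul b
    rwa [e, ← sub_eq_add_neg] at this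
  obtain ⟨f, rfl⟩ := RingQuot.mkAlgHom_surjective ℂ CRel r
  induction f using FreeAlgebra.induction with
  | grade0 c => simpa using hc c
  | grade1 i =>
    fin_cases i
    · change P xx
      rw [xx_eq]
      exact hsub _ _ (hmul _ _ hy hz) (hmul _ _ hz hy)
    · exact hy
    · exact hz
  | mul a b ha hb => rw [map_mul]; exact hmul _ _ ha hb
  | add a b ha hb => rw [map_add]; exact hadd _ _ ha hb

/-- The kernel of the augmentation is the left ideal generated by `yy`, `zz`. -/
lemma gen (ε : RR →ₐ[ℂ] ℂ) (hy : ε yy = 0) (hz : ε zz = 0) (r : RR) :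
    ∃ a b, r = algebraMap ℂ RR (ε r) + (a * yy + b * zz) := by
  induction r using ind with
  | hc c => exact ⟨0, 0, by simp⟩
  | hy => exact ⟨1, 0, by simp [hy]⟩
  | hz => exact ⟨0, 1, by simp [hz]⟩
  | hadd r s hr hs =>
    obtain ⟨a, b, h⟩ := hr
    obtain ⟨c, d, h'⟩ := hs
    refine ⟨a + c, b + d, ?_⟩
    conv_lhs => rw [h, h']
    simp only [map_add]
    noncomm_ring
  | hmul r s hr hs =>
    obtain ⟨a, b, h⟩ := hr
    obtain ⟨c, d, h'⟩ := hs
    refine ⟨algebraMap ℂ RR (ε s) * a + r * c, algebraMap ℂ RR (ε s) * b + r * d, ?_⟩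
    have h1 : r * s = algebraMap ℂ RR (ε s) * r + r * (c * yy + d * zz) := by
      conv_lhs => rw [h']
      rw [mul_add, Algebra.commutes]
    have h2 : ε (r * s) = ε s * ε r := by rw [map_mul, mul_comm]
    rw [h2, h1, map_mul]
    conv_lhs => enter [1]; rw [h]
    noncomm_ring

abbrev AY := RR ⧸ (Submodule.span RR {yy})
abbrev AZ := RR ⧸ (Submodule.span RR {zz})

abbrev NN := ℂ × AY × AZ

noncomputable def actY : Module.End ℂ NN where
  toFun n := (0, Submodule.Quotient.mk (algebraMap ℂ RR n.1) + yy • n.2.1, yy • n.2.2)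
  map_add' a b := by simp; abel
  map_smul' c a := by
    simp [smul_comm yy c, Algebra.algebraMap_eq_smul_one, mul_smul]
    exact (smul_add (A := AY) c _ _).symm

noncomputable def actZ : Module.End ℂ NN where
  toFun n := (0, zz • n.2.1, Submodule.Quotient.mk (algebraMap ℂ RR n.1) + zz • n.2.2)
  map_add' a b := by simp; abel
  map_smul' c a := by
    simp [smul_comm zz c, Algebra.algebraMap_eq_smul_one, mul_smul]
    exact (smul_add (A := AZ) c _ _).symm

lemma yy_mk (c : ℂ) : yy • (Submodule.Quotient.mk (algebraMap ℂ RR c) : AY) = 0 := by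
  rw [← Submodule.Quotient.mk_smul, Submodule.Quotient.mk_eq_zero, smul_eq_mul,
    ← Algebra.commutes]
  exact Submodule.smul_mem _ _ (Submodule.mem_span_singleton_self _)

lemma zz_mk (c : ℂ) : zz • (Submodule.Quotient.mk (algebraMap ℂ RR c) : AZ) = 0 := by
  rw [← Submodule.Quotient.mk_smul, Submodule.Quotient.mk_eq_zero, smul_eq_mul,
    ← Algebra.commutes]
  exact Submodule.smul_mem _ _ (Submodule.mem_span_singleton_self _)

lemma actY_sq : actY * actY = 0 := by
  refine LinearMap.ext fun n => ?_
  simp only [Module.End.mul_apply, actY, LinearMap.coe_mk, AddHom.coe_mk, smul_add, yy_mk,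
    smul_smul, yy_sq, zero_smul]
  simp

lemma actZ_sq : actZ * actZ = 0 := by
  refine LinearMap.ext fun n => ?_
  simp only [Module.End.mul_apply, actZ, LinearMap.coe_mk, AddHom.coe_mk, smul_add, zz_mk,
    smul_smul, zz_sq, zero_smul]
  simp

noncomputable def Phi : RR →ₐ[ℂ] Module.End ℂ NN :=
  RingQuot.liftAlgHom ℂ ⟨FreeAlgebra.lift ℂ ![actY * actZ - actZ * actY, actY, actZ], by
    have h1 := actY_sq
    have h2 := actZ_sq
    intro a b h
    cases h with
    | r12 => 
      simp only [map_add, map_mul, lift_ι_apply, map_zero, Matrix.cons_val]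
      simp only [sub_mul, mul_sub, ← mul_assoc, h1]
      simp [mul_assoc, h1]
    | r13 =>
      simp only [map_add, map_mul, lift_ι_apply, map_zero, Matrix.cons_val]
      simp only [sub_mul, mul_sub, ← mul_assoc, h2]
      simp [mul_assoc, h2]
    | r23 => simp only [map_sub, map_mul, lift_ι_apply, Matrix.cons_val]
    | r22 => simpa using h1
    | r33 => simpa using h2⟩

lemma Phi_yy : Phi yy = actY := by simp [Phi, yy]
lemma Phi_zz : Phi zz = actZ := by simp [Phi, zz]

lemma Phi_apply (r : RR) : ∀ (a : AY) (b : AZ), Phi r (0, a, b) = (0, r • a, r • b) := by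
  induction r using ind with
  | hc c => intro a b; simp [Module.algebraMap_end_apply]
  | hy => intro a b; simp [Phi_yy, actY]
  | hz => intro a b; simp [Phi_zz, actZ]
  | hadd r s hr hs => intro a b; simp [hr, hs, add_smul]
  | hmul r s hr hs => intro a b; simp [hr, hs, mul_smul]

lemma exact_key (a b : RR) (h : a * yy + b * zz = 0) :
    (∃ c, a = c * yy) ∧ ∃ d, b = d * zz := by
  have h1 : Phi (a * yy + b * zz) (1, 0, 0) = 0 := by rw [h]; simp
  have e1 : actY ((1, 0, 0) : NN) = (0, Submodule.Quotient.mk 1, 0) := by simp [actY]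
  have e2 : actZ ((1, 0, 0) : NN) = (0, 0, Submodule.Quotient.mk 1) := by simp [actZ]
  rw [map_add, map_mul, map_mul, LinearMap.add_apply, Module.End.mul_apply, Module.End.mul_apply,
    Phi_yy, Phi_zz, e1, e2, Phi_apply, Phi_apply, ← Submodule.Quotient.mk_smul,
    ← Submodule.Quotient.mk_smul] at h1
  simp only [smul_eq_mul, mul_one, smul_zero, Prod.mk_add_mk, add_zero, zero_add, Prod.mk_eq_zero,
    true_and, Submodule.Quotient.mk_eq_zero, Submodule.mem_span_singleton] at h1
  obtain ⟨⟨c, hc⟩, d, hd⟩ := h1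
  exact ⟨⟨c, hc.symm⟩, d, hd.symm⟩

end Betti

namespace Betti
open CategoryTheory

section
variable {R : Type} [Ring R] (y z : R)

/-- right multiplication -/
def rm (y : R) : R →ₗ[R] R := LinearMap.toSpanSingleton R R y

@[simp] lemma rm_apply (y a : R) : rm y a = a * y := rfl

def X (R : Type) [Ring R] : ℕ → ModuleCat R
  | 0 => ModuleCat.of R R
  | _ + 1 => ModuleCat.of R (R × R)

def dd : ∀ n, X R (n + 1) ⟶ X R n
  | 0 => ModuleCat.ofHom ((rm y).coprod (rm z))
  | _ + 1 => ModuleCat.ofHom ((rm y).prodMap (rm z))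

lemma dd_comp (hy : y * y = 0) (hz : z * z = 0) (n : ℕ) : dd y z (n + 1) ≫ dd y z n = 0 := by
  cases n with
  | zero =>
    apply ModuleCat.hom_ext
    refine LinearMap.ext fun (a : R × R) => ?_
    change a.1 * y * y + a.2 * z * z = 0
    simp [mul_assoc, hy, hz]
  | succ n =>
    apply ModuleCat.hom_ext
    refine LinearMap.ext fun (a : R × R) => ?_
    change ((a.1 * y * y, a.2 * z * z) : R × R) = 0
    simp [mul_assoc, hy, hz]

noncomputable def cplx (hy : y * y = 0) (hz : z * z = 0) : ChainComplex (ModuleCat R) ℕ :=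
  ChainComplex.of (X R) (dd y z) (dd_comp y z hy hz)

lemma cplx_d (hy : y * y = 0) (hz : z * z = 0) (n : ℕ) :
    (cplx y z hy hz).d (n + 1) n = dd y z n := ChainComplex.of_d _ _ _

instance projX (n : ℕ) : Projective (X R n) := by
  cases n with
  | zero => exact ModuleCat.projective_of_free (Module.Basis.singleton Unit R)
  | succ n =>
    have : Module.Projective R (R × R) := inferInstance
    exact (IsProjective.iff_projective (R × R)).1 this

variable [Algebra ℂ R] (ε : R →ₐ[ℂ] ℂ)

noncomputable def triv : ModuleCat R :=
  letI : Module R ℂ := Module.compHom ℂ ε.toRingHom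
  ModuleCat.of R ℂ

noncomputable def aug : X R 0 ⟶ triv ε :=
  letI : Module R ℂ := Module.compHom ℂ ε.toRingHom
  ModuleCat.ofHom (LinearMap.toSpanSingleton R ℂ 1)

/-- evaluation of a morphism to the trivial module, as a complex number -/
noncomputable def ev {n : ℕ} (f : X R n ⟶ triv ε) (x : X R n) : ℂ := f.hom x

lemma ev_add {n : ℕ} (f : X R n ⟶ triv ε) (a b : X R n) :
    ev ε f (a + b) = ev ε f a + ev ε f b := f.hom.map_add a b

lemma ev_smul {n : ℕ} (f : X R n ⟶ triv ε) (r : R) (a : X R n) :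
    ev ε f (r • a) = ε r * ev ε f a := f.hom.map_smul r a

lemma aug_apply (a : R) : ev ε (aug ε) a = ε a := by
  change ε a * 1 = ε a
  rw [mul_one]

lemma d_aug (hεy : ε y = 0) (hεz : ε z = 0) : dd y z 0 ≫ aug ε = 0 := by
  apply ModuleCat.hom_ext
  refine LinearMap.ext fun (a : R × R) => ?_
  change ev ε (aug ε) (a.1 * y + a.2 * z : R) = (0 : ℂ)
  rw [aug_apply]
  simp [hεy, hεz]

noncomputable def piMap (hy : y * y = 0) (hz : z * z = 0) (hεy : ε y = 0) (hεz : ε z = 0) :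
    cplx y z hy hz ⟶ (ChainComplex.single₀ (ModuleCat R)).obj (triv ε) :=
  (ChainComplex.toSingle₀Equiv _ _).symm ⟨aug ε, by
    rw [cplx_d]; exact d_aug y z ε hεy hεz⟩

lemma piMap_quasiIso (hy : y * y = 0) (hz : z * z = 0) (hεy : ε y = 0) (hεz : ε z = 0)
    (hex : ∀ a b, a * y + b * z = 0 → (∃ c, a = c * y) ∧ ∃ d, b = d * z)
    (hgen : ∀ r, ε r = 0 → ∃ a b, r = a * y + b * z) :
    QuasiIso (piMap y z ε hy hz hεy hεz) where
  quasiIsoAt m := by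
    cases m with
    | zero =>
      rw [ChainComplex.quasiIsoAt₀_iff, ShortComplex.quasiIso_iff_of_zeros']
      rotate_left
      · exact (cplx y z hy hz).shape _ _ (by simp)
      · rfl
      · rfl
      have h0 : (piMap y z ε hy hz hεy hεz).f 0 = aug ε :=
        ChainComplex.toSingle₀Equiv_symm_apply_f_zero _ _
      constructor
      · rw [ShortComplex.moduleCat_exact_iff]
        intro (r : R) hr
        have hr1 : ev (n := 0) ε ((piMap y z ε hy hz hεy hεz).f 0) r = 0 := hr
        rw [h0, aug_apply] at hr1
        obtain ⟨a, b, h⟩ := hgen r hr1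
        exact ⟨((a, b) : R × R),
          (congrArg (fun g => g.hom ((a, b) : R × R)) (cplx_d y z hy hz 0)).trans h.symm⟩
      · rw [ModuleCat.epi_iff_surjective]
        intro (c : ℂ)
        refine ⟨algebraMap ℂ R c, ?_⟩
        change ev (n := 0) ε ((piMap y z ε hy hz hεy hεz).f 0) (algebraMap ℂ R c) = c
        rw [h0]
        exact (aug_apply ε _).trans (ε.commutes c)
    | succ m =>
      rw [quasiIsoAt_iff_exactAt' (hL := ChainComplex.exactAt_succ_single_obj ..),
          HomologicalComplex.exactAt_iff' _ (m + 2) (m + 1) m (by simp) (by simp)]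
      rw [ShortComplex.moduleCat_exact_iff]
      intro (r : R × R) hr
      have hr1 : (dd y z m).hom r = 0 :=
        (congrArg (fun g => g.hom r) (cplx_d y z hy hz m)).symm.trans hr
      have : r.1 * y + r.2 * z = 0 := by
        cases m with
        | zero => exact hr1
        | succ m =>
          have hr2 : ((r.1 * y, r.2 * z) : R × R) = 0 := hr1
          simp only [Prod.mk_eq_zero] at hr2
          simp [hr2]
      obtain ⟨⟨c, hc⟩, d, hd⟩ := hex _ _ this
      refine ⟨((c, d) : R × R),
          (congrArg (fun g => g.hom ((c, d) : R × R)) (cplx_d y z hy hz (m + 1))).trans ?_⟩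
      exact Prod.ext hc.symm hd.symm

noncomputable def res (hy : y * y = 0) (hz : z * z = 0) (hεy : ε y = 0) (hεz : ε z = 0)
    (hex : ∀ a b, a * y + b * z = 0 → (∃ c, a = c * y) ∧ ∃ d, b = d * z)
    (hgen : ∀ r, ε r = 0 → ∃ a b, r = a * y + b * z) :
    ProjectiveResolution (triv ε) where
  complex := cplx y z hy hz
  projective n := projX n
  π := piMap y z ε hy hz hεy hεz
  quasiIso := piMap_quasiIso y z ε hy hz hεy hεz hex hgen

lemma dd_comp_triv (hεy : ε y = 0) (hεz : ε z = 0) (n : ℕ) (f : X R n ⟶ triv ε) :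
    dd y z n ≫ f = 0 := by
  apply ModuleCat.hom_ext
  refine LinearMap.ext fun (a : R × R) => ?_
  cases n with
  | zero =>
    change ev ε f (a.1 * y + a.2 * z : R) = (0 : ℂ)
    have h1 : (a.1 * y + a.2 * z : R) = (a.1 * y + a.2 * z) • (1 : R) := by simp
    rw [h1]
    refine (ev_smul ε f (a.1 * y + a.2 * z) (1 : R)).trans ?_
    simp [hεy, hεz]
  | succ n =>
    change ev ε f ((a.1 * y, a.2 * z) : R × R) = (0 : ℂ)
    have h1 : ((a.1 * y, a.2 * z) : R × R) =
      (a.1 * y) • ((1, 0) : R × R) + (a.2 * z) • ((0, 1) : R × R) := by simp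
    rw [h1]
    refine (ev_add ε f _ _).trans ?_
    refine (congrArg₂ (· + ·) (ev_smul ε f (a.1 * y) ((1, 0) : R × R))
      (ev_smul ε f (a.2 * z) ((0, 1) : R × R))).trans ?_
    simp [hεy, hεz]

lemma smul_hom_apply (n : ℕ) (c : ℂ) (f : X R n ⟶ triv ε) (x : X R n) :
    ev ε (c • f) x = c * ev ε f x := by
  change ε (algebraMap ℂ R c) * ev ε f x = _
  simp

lemma finrank_zero : Module.finrank ℂ (X R 0 ⟶ triv ε) = 1 := by
  let _ : Module R ℂ := Module.compHom ℂ ε.toRingHom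
  let e : (X R 0 ⟶ triv ε) ≃ₗ[ℂ] ℂ :=
    { toFun := fun f => ev ε f (1 : R)
      invFun := fun c => ModuleCat.ofHom (LinearMap.toSpanSingleton R ℂ c)
      map_add' := fun f g => rfl
      map_smul' := fun c f => smul_hom_apply ε 0 c f (1 : R)
      left_inv := fun f => by
        apply ModuleCat.hom_ext
        refine LinearMap.ext_ring (R := R) ?_
        exact one_smul R _
      right_inv := fun c => one_smul R c }
  rw [e.finrank_eq, Module.finrank_self]

lemma finrank_succ (n : ℕ) : Module.finrank ℂ (X R (n + 1) ⟶ triv ε) = 2 := by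
  let _ : Module R ℂ := Module.compHom ℂ ε.toRingHom
  let e : (X R (n + 1) ⟶ triv ε) ≃ₗ[ℂ] ℂ × ℂ :=
    { toFun := fun f => (ev ε f ((1, 0) : R × R), ev ε f ((0, 1) : R × R))
      invFun := fun c => ModuleCat.ofHom
        ((LinearMap.toSpanSingleton R ℂ c.1).coprod (LinearMap.toSpanSingleton R ℂ c.2))
      map_add' := fun f g => rfl
      map_smul' := fun c f => Prod.ext (smul_hom_apply ε (n + 1) c f ((1, 0) : R × R))
        (smul_hom_apply ε (n + 1) c f ((0, 1) : R × R))
      left_inv := fun f => by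
        apply ModuleCat.hom_ext
        refine LinearMap.prod_ext (R := R) ?_ ?_
        · refine LinearMap.ext_ring ?_
          change (1 : R) • (ev ε f ((1, 0) : R × R) : ℂ) + (0 : R) • (ev ε f ((0, 1) : R × R) : ℂ) = _
          rw [one_smul, zero_smul, add_zero]
          rfl
        · refine LinearMap.ext_ring ?_
          change (0 : R) • (ev ε f ((1, 0) : R × R) : ℂ) + (1 : R) • (ev ε f ((0, 1) : R × R) : ℂ) = _
          rw [one_smul, zero_smul, zero_add]
          rfl
      right_inv := fun c => by
        change ((1 : R) • c.1 + (0 : R) • c.2, (0 : R) • c.1 + (1 : R) • c.2) = c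
        simp }
  rw [e.finrank_eq, Module.finrank_prod, Module.finrank_self]

lemma extDim_eq (hy : y * y = 0) (hz : z * z = 0) (hεy : ε y = 0) (hεz : ε z = 0)
    (hex : ∀ a b, a * y + b * z = 0 → (∃ c, a = c * y) ∧ ∃ d, b = d * z)
    (hgen : ∀ r, ε r = 0 → ∃ a b, r = a * y + b * z) (n : ℕ) :
    extDim R ε n = Module.finrank ℂ (X R n ⟶ triv ε) := by
  let P := res y z ε hy hz hεy hεz hex hgen
  let K := P.complex.linearYonedaObj ℂ (triv ε)
  have hd : ∀ i j, K.d i j = 0 := by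
    intro i j
    by_cases hij : (ComplexShape.up ℕ).Rel i j
    · obtain rfl : i + 1 = j := hij
      apply ModuleCat.hom_ext
      refine LinearMap.ext fun (f : X R i ⟶ triv ε) => ?_
      change (cplx y z hy hz).d (i + 1) i ≫ f = 0
      rw [cplx_d]
      exact dd_comp_triv y z ε hεy hεz i f
    · exact K.shape _ _ hij
  have e1 : extC R ε n ≅ K.homology n := P.isoExt n (triv ε)
  have e2 : K.homology n ≅ K.X n :=
    (K.isoHomologyπ _ n rfl (hd _ _)).symm ≪≫ K.iCyclesIso n _ rfl (hd _ _)
  exact (e1 ≪≫ e2).toLinearEquiv.finrank_eq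
end
end Betti

theorem betti_numbers (ε : RingQuot CRel →ₐ[ℂ] ℂ)
    (hε : ∀ i : Fin 3, ε (RingQuot.mkAlgHom ℂ CRel (ι ℂ i)) = 0) :
    (extDim (RingQuot CRel) ε 0 = 1 ∧ ∀ n ≥ 1, extDim (RingQuot CRel) ε n = 2) ∧
    (PowerSeries.mk fun n => (extDim (RingQuot CRel) ε n : ℚ)) * (1 - PowerSeries.X) =
      1 + PowerSeries.X := by
  have hy : ε Betti.yy = 0 := hε 1
  have hz : ε Betti.zz = 0 := hε 2
  have hgen : ∀ r, ε r = 0 → ∃ a b, r = a * Betti.yy + b * Betti.zz := by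
    intro r hr
    obtain ⟨a, b, h⟩ := Betti.gen ε hy hz r
    rw [hr, map_zero, zero_add] at h
    exact ⟨a, b, h⟩
  have key := Betti.extDim_eq Betti.yy Betti.zz ε Betti.yy_sq Betti.zz_sq hy hz
    Betti.exact_key hgen
  have h0 : extDim (RingQuot CRel) ε 0 = 1 := (key 0).trans (Betti.finrank_zero ε)
  have h1 : ∀ n, extDim (RingQuot CRel) ε (n + 1) = 2 := fun n =>
    (key (n + 1)).trans (Betti.finrank_succ ε n)
  refine ⟨⟨h0, fun n hn => ?_⟩, ?_⟩
  · obtain ⟨m, rfl⟩ := Nat.exists_eq_add_of_le' hn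
    exact h1 m
  · ext n
    rw [mul_sub, mul_one, map_sub, map_add]
    rcases n with _ | _ | n
    · simp [h0]
    · simp [PowerSeries.coeff_succ_mul_X, h0, h1, PowerSeries.coeff_one]; norm_num
    · simp [PowerSeries.coeff_succ_mul_X, h1, PowerSeries.coeff_one, PowerSeries.coeff_X]
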